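/- arXiv:1607.02785 — 4 statements merged into one kernel-verified Lean document; each statement's English description precedes it below -/
import Mathlib

section
/- Let E be a finite set and let τ : 2^E → 2^E be a closure operator, i.e., τ satisfies C1 (X ⊆ τ(X) for all X ⊆ E), C2 (X ⊆ Y implies τ(X) ⊆ τ(Y)), and C3 (τ(τ(X)) = τ(X) for all X ⊆ E). Define V : 2^E → 2^E by V(X) = E \ τ(X). Then (E, V) is a violator space: V satisfies consistency (G ∩ V(G) = ∅ for all G ⊆ E) and locality (for all F ⊆ G ⊆ E with G ∩ V(F) = ∅ one has V(G) = V(F)). -/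
/-- The axioms of a violator space `(E, V)`, stated for any partial order with a least element in
place of the subsets of `E`; `G ∩ H = ∅` is encoded as `Disjoint G H`. -/
structure IsViolatorOperator {β : Type*} [PartialOrder β] [OrderBot β] (V : β → β) : Prop where
  consistency : ∀ g, Disjoint g (V g)
  locality : ∀ f g, f ≤ g → Disjoint g (V f) → V g = V f

theorem closure_eq_of_le_of_le_closure {β : Type*} [PartialOrder β] (c : ClosureOperator β)
    {x y : β} (hxy : x ≤ y) (hyx : y ≤ c x) : c y = c x :=
  (c.le_closure_iff.1 hyx).antisymm (c.monotone hxy)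

theorem closure_gives_violator_general {β : Type*} [BooleanAlgebra β] (c : ClosureOperator β) :
    IsViolatorOperator fun x => (c x)ᶜ where
  consistency g := disjoint_compl_right_iff.2 (c.le_closure g)
  locality _ _ hfg hdisj :=
    congrArg _ (closure_eq_of_le_of_le_closure c hfg (disjoint_compl_right_iff.1 hdisj))

/-- A closure operator τ (C1, C2, C3) on a finite set E gives a
violator space via V(X) = E \ τ(X): V satisfies consistency and locality. -/
theorem closure_gives_violator {α : Type*} [Fintype α] [DecidableEq α]
    (τ : Finset α → Finset α)
    (hC1 : ∀ X : Finset α, X ⊆ τ X)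
    (hC2 : ∀ X Y : Finset α, X ⊆ Y → τ X ⊆ τ Y)
    (hC3 : ∀ X : Finset α, τ (τ X) = τ X) :
    (∀ G : Finset α, G ∩ (τ G)ᶜ = ∅) ∧
    (∀ F G : Finset α, F ⊆ G → G ∩ (τ F)ᶜ = ∅ → (τ G)ᶜ = (τ F)ᶜ) := by
  have hV : IsViolatorOperator fun X => (τ X)ᶜ :=
    closure_gives_violator_general (.mk' τ hC2 hC1 fun X => (hC3 X).le)
  simpa only [Finset.disjoint_iff_inter_eq_empty] using And.intro hV.consistency hV.locality
end

section
/- Let (H, V) be a violator space, i.e., H is a finite set and V : 2^H → 2^H satisfies consistency (G ∩ V(G) = ∅ for all G ⊆ H) and locality (for all F ⊆ G ⊆ H with G ∩ V(F) = ∅ one has V(G) = V(F)). Define τ : 2^H → 2^H by τ(X) = H \ V(X). Then τ satisfies axioms C1 (X ⊆ τ(X) for all X ⊆ H) and C3 (τ(τ(X)) = τ(X) for all X ⊆ H). -/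
/-- The axioms of a violator space, with the subsets of the ground set replaced by the elements of
a Heyting algebra: `V G` stands for the set of violators of `G`, and an empty intersection is
expressed by `Disjoint`. -/
structure IsViolatorMap {β : Type*} [HeytingAlgebra β] (V : β → β) : Prop where
  consistency (G : β) : Disjoint G (V G)
  locality {F G : β} : F ≤ G → Disjoint G (V F) → V G = V F

namespace IsViolatorMap

variable {β : Type*} [HeytingAlgebra β] {V : β → β}

theorem le_compl_apply (hV : IsViolatorMap V) (X : β) : X ≤ (V X)ᶜ :=
  (hV.consistency X).le_compl_right

theorem apply_compl_apply (hV : IsViolatorMap V) (X : β) : V (V X)ᶜ = V X :=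
  hV.locality (hV.le_compl_apply X) disjoint_compl_left

end IsViolatorMap

theorem violator_gives_C1_C3_general {β : Type*} [HeytingAlgebra β] {V : β → β}
    (hV : IsViolatorMap V) :
    (∀ X : β, X ≤ (V X)ᶜ) ∧ (∀ X : β, (V (V X)ᶜ)ᶜ = (V X)ᶜ) :=
  ⟨hV.le_compl_apply, fun X => congrArg compl (hV.apply_compl_apply X)⟩

/-- If (H,V) is a violator space (consistency and locality), then
τ(X) = H \ V(X) satisfies C1 and C3. -/
theorem violator_gives_C1_C3 {α : Type*} [Fintype α] [DecidableEq α]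
    (V : Finset α → Finset α)
    (hCons : ∀ G : Finset α, G ∩ V G = ∅)
    (hLoc : ∀ F G : Finset α, F ⊆ G → G ∩ V F = ∅ → V G = V F) :
    (∀ X : Finset α, X ⊆ (V X)ᶜ) ∧
    (∀ X : Finset α, (V ((V X)ᶜ))ᶜ = (V X)ᶜ) :=
  violator_gives_C1_C3_general
    ⟨fun G => disjoint_iff.mpr (hCons G), fun hFG hGF => hLoc _ _ hFG (disjoint_iff.mp hGF)⟩
end

section
/- Let (E, τ) be a convex space: E is a finite set and τ : 2^E → 2^E satisfies C1 (X ⊆ τ(X) for all X ⊆ E) and convexity (X ⊆ Y ⊆ Z and τ(X) = τ(Z) imply τ(Y) = τ(X)). Then (E, τ) is uniquely generated if and only if for all X, Y ⊆ E, τ(X) = τ(Y) implies τ(X ∩ Y) = τ(X) = τ(Y). -/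
/-- `B` is a basis of `X` w.r.t. `τ`: a generator of `X` minimal under inclusion. -/
def IsBasis {α : Type*} (τ : Finset α → Finset α) (X B : Finset α) : Prop :=
  τ B = τ X ∧ ∀ B' : Finset α, τ B' = τ X → B' ⊆ B → B' = B

/-! The bases of `X` are the minimal elements of the fiber of `τ` through `X`, and convexity says
that this fiber is order-connected. Two minimal elements of a set closed under meets both equal
their meet. Conversely, if a well-founded order-connected set has a single minimal element, that
element lies below any two members `x` and `y`, so `x ⊓ y` lies between two members of the set. -/

section MinimalElements

variable {L : Type*} [SemilatticeInf L] {S : Set L}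

theorem eq_of_minimal_of_infClosed (hS : InfClosed S) {b c : L}
    (hb : Minimal (· ∈ S) b) (hc : Minimal (· ∈ S) c) : b = c := by
  have hbc : b ⊓ c ∈ S := hS hb.prop hc.prop
  exact (hb.eq_of_ge hbc inf_le_left).trans (hc.eq_of_le hbc inf_le_right)

theorem infClosed_of_minimal_unique [WellFoundedLT L] (hS : S.OrdConnected)
    (huniq : ∀ b c, Minimal (· ∈ S) b → Minimal (· ∈ S) c → b = c) : InfClosed S := by
  intro x hx y hy
  obtain ⟨b, hbx, hb⟩ := exists_minimal_le_of_wellFoundedLT (· ∈ S) x hx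
  obtain ⟨c, hcy, hc⟩ := exists_minimal_le_of_wellFoundedLT (· ∈ S) y hy
  have hby : b ≤ y := (huniq b c hb hc).trans_le hcy
  exact hS.out hb.prop hx ⟨le_inf hbx hby, inf_le_left⟩

theorem existsUnique_minimal_iff_infClosed [WellFoundedLT L] (hS : S.OrdConnected)
    (hne : S.Nonempty) : (∃! b, Minimal (· ∈ S) b) ↔ InfClosed S := by
  constructor
  · intro h
    exact infClosed_of_minimal_unique hS fun _ _ => h.unique
  · intro h
    obtain ⟨x, hx⟩ := hne
    obtain ⟨b, -, hb⟩ := exists_minimal_le_of_wellFoundedLT (· ∈ S) x hx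
    exact ⟨b, hb, fun _ hc => eq_of_minimal_of_infClosed h hc hb⟩

end MinimalElements

section Fibers

variable {L β : Type*} {τ : L → β}

theorem ordConnected_fiber [Preorder L]
    (hconv : ∀ x y z : L, x ≤ y → y ≤ z → τ x = τ z → τ y = τ x) (t : β) :
    (τ ⁻¹' {t}).OrdConnected :=
  ⟨fun x (hx : τ x = t) z (hz : τ z = t) y hy =>
    (hconv x y z hy.1 hy.2 (hx.trans hz.symm)).trans hx⟩

theorem forall_infClosed_fiber_iff [SemilatticeInf L] :
    (∀ x, InfClosed (τ ⁻¹' {τ x})) ↔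
      ∀ x y, τ x = τ y → τ (x ⊓ y) = τ x ∧ τ (x ⊓ y) = τ y := by
  constructor
  · intro h x y hxy
    have hinf : τ (x ⊓ y) = τ x := h x rfl hxy.symm
    exact ⟨hinf, hinf.trans hxy⟩
  · intro h x y (hy : τ y = τ x) z (hz : τ z = τ x)
    exact (h y z (hy.trans hz.symm)).1.trans hy

end Fibers

theorem isBasis_iff_minimal {α : Type*} {τ : Finset α → Finset α} {X B : Finset α} :
    IsBasis τ X B ↔ Minimal (τ · = τ X) B := by
  simp only [IsBasis, minimal_iff, eq_comm (a := B)]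

theorem convexSpace_uniquelyGenerated_iff_inter_general {L β : Type*} [SemilatticeInf L]
    [WellFoundedLT L] (τ : L → β)
    (hconv : ∀ x y z : L, x ≤ y → y ≤ z → τ x = τ z → τ y = τ x) :
    (∀ x, ∃! b, Minimal (τ · = τ x) b) ↔
      ∀ x y, τ x = τ y → τ (x ⊓ y) = τ x ∧ τ (x ⊓ y) = τ y :=
  (forall_congr' fun x =>
    existsUnique_minimal_iff_infClosed (ordConnected_fiber hconv (τ x)) ⟨x, rfl⟩).trans
    forall_infClosed_fiber_iff

/-- A convex space (C1 + convexity) is uniquely generated iff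
τ(X) = τ(Y) implies τ(X ∩ Y) = τ(X) = τ(Y). -/
theorem convexSpace_uniquelyGenerated_iff_inter {α : Type*} [Fintype α] [DecidableEq α]
    (τ : Finset α → Finset α)
    (hC1 : ∀ X : Finset α, X ⊆ τ X)
    (hConv : ∀ X Y Z : Finset α, X ⊆ Y → Y ⊆ Z → τ X = τ Z → τ Y = τ X) :
    (∀ X : Finset α, ∃! B : Finset α, IsBasis τ X B) ↔
    (∀ X Y : Finset α, τ X = τ Y → τ (X ∩ Y) = τ X ∧ τ (X ∩ Y) = τ Y) := by
  simp only [isBasis_iff_minimal]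
  exact convexSpace_uniquelyGenerated_iff_inter_general τ hConv
end

section
/- Let (E, τ) be a violator space: E is a finite set and τ : 2^E → 2^E satisfies C1 (X ⊆ τ(X) for all X ⊆ E) and C22 (F ⊆ G ⊆ τ(F) implies τ(G) = τ(F)). Then for every X ⊆ E and x ∈ X: x is an extreme point of X (i.e., x ∉ τ(X \ {x})) if and only if x ∈ B for every generator B of X contained in X (i.e., every B ⊆ X with τ(B) = τ(X)). -/
/-!
The fibres of `τ` are order convex: if `F ≤ G ≤ H` and `τ F = τ H`, then `G ≤ H ≤ τ H = τ F`, so C22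
gives `τ G = τ F`. A generator of `X` that avoids `x` lies below `X \ {x}`, so by convexity
`X \ {x}` is itself a generator. Hence only the candidate `X \ {x}` has to be tested, and it
generates `X` exactly when `x ∈ τ (X \ {x})`.
-/

/-- The axioms C1 (`le_apply`) and C22 (`apply_eq`) of a violator space. The powerset of the ground
set is replaced by an arbitrary order, so that operators on `Finset α` and on `Set α` are both
instances. -/
structure IsViolatorOperator_s13 {β : Type*} [LE β] (τ : β → β) : Prop where
  le_apply (X : β) : X ≤ τ X
  apply_eq {F G : β} (hFG : F ≤ G) (hG : G ≤ τ F) : τ G = τ F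

namespace IsViolatorOperator_s13

theorem apply_eq_of_le_of_le {β : Type*} [Preorder β] {τ : β → β} (hτ : IsViolatorOperator_s13 τ)
    {F G H : β} (hFG : F ≤ G) (hGH : G ≤ H) (hFH : τ F = τ H) : τ G = τ H := by
  have hG : G ≤ τ F := hFH ▸ hGH.trans (hτ.le_apply H)
  exact (hτ.apply_eq hFG hG).trans hFH

variable {β : Type*} [GeneralizedBooleanAlgebra β] {τ : β → β} {a X : β}

theorem apply_sdiff_eq_iff_le (hτ : IsViolatorOperator_s13 τ) (ha : a ≤ X) :
    τ (X \ a) = τ X ↔ a ≤ τ (X \ a) := by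
  constructor
  · intro h
    exact h ▸ ha.trans (hτ.le_apply X)
  · intro h
    have hX : X ≤ τ (X \ a) := calc
      X = X \ a ⊔ a := (sdiff_sup_cancel ha).symm
      _ ≤ τ (X \ a) := sup_le (hτ.le_apply _) h
    exact (hτ.apply_eq sdiff_le hX).symm

theorem apply_sdiff_eq_iff_exists_disjoint (hτ : IsViolatorOperator_s13 τ) :
    τ (X \ a) = τ X ↔ ∃ B ≤ X, τ B = τ X ∧ Disjoint a B := by
  constructor
  · intro h
    exact ⟨X \ a, sdiff_le, h, disjoint_sdiff_self_right⟩
  · rintro ⟨B, hBX, hB, haB⟩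
    exact hτ.apply_eq_of_le_of_le (le_sdiff.2 ⟨hBX, haB.symm⟩) sdiff_le hB

end IsViolatorOperator_s13

/-- For subsets, `a` is a singleton `{x}`, and `¬ Disjoint {x} B` says `x ∈ B`. -/
theorem extremePoint_iff_mem_generators_general {β : Type*} [GeneralizedBooleanAlgebra β]
    {τ : β → β} (hτ : IsViolatorOperator_s13 τ) {a X : β} (ha : a ≤ X) :
    ¬ a ≤ τ (X \ a) ↔ ∀ B ≤ X, τ B = τ X → ¬ Disjoint a B := by
  simp only [← hτ.apply_sdiff_eq_iff_le ha, hτ.apply_sdiff_eq_iff_exists_disjoint, not_exists,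
    not_and]

/-- In a violator space (C1 + C22), for x ∈ X: x is an extreme point
of X iff x belongs to every generator B ⊆ X of X. -/
theorem extremePoint_iff_mem_generators {α : Type*} [Fintype α] [DecidableEq α]
    (τ : Finset α → Finset α)
    (hC1 : ∀ X : Finset α, X ⊆ τ X)
    (hC22 : ∀ F G : Finset α, F ⊆ G → G ⊆ τ F → τ G = τ F) :
    ∀ (X : Finset α) (x : α), x ∈ X →
      (x ∉ τ (X.erase x) ↔ ∀ B : Finset α, B ⊆ X → τ B = τ X → x ∈ B) := by
  intro X x hx
  simpa [Finset.sdiff_singleton_eq_erase] using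
    extremePoint_iff_mem_generators_general ⟨hC1, hC22 _ _⟩ (Finset.singleton_subset_iff.2 hx)
end
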